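/- For every integer ℓ ≥ 1 and every ε ∈ (0,1) there exists an integer Z ≥ 1 (one may take Z = 2^{Σ_{r=1}^{ℓ} K^{2r}} with K = ℓ·(⌈2/ε⌉ + 2)) such that the following holds: for every integer z ≥ 1 and every time series x ∈ ℝ^z admitting a minimum-error ℓ-simplification (i.e. some x̃ ∈ ℝ^ℓ with d_dF(x,x̃) ≤ d_dF(x,y) for all y ∈ ℝ^ℓ), there exist an integer z' with 1 ≤ z' ≤ Z and a time series x' ∈ ℝ^{z'} such that for every y ∈ ℝ^ℓ: (1−ε)·d_dF(x,y) ≤ d_dF(x',y) ≤ (1+ε)·d_dF(x,y). -/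

import Mathlib

/-!
Let `Δ` be the distance from `x` to its minimum-error `ℓ`-simplification `xt`, so that
`Δ ≤ dFrechet z ℓ x y` for every `y`. Each `x i` lies within `Δ` of some `xt j`, hence within `ε Δ`
of a point of the grid `xt j - Δ + k ε Δ`, `k ≤ ⌈2 / ε⌉`. Replacing every `x i` by such a grid point
changes each distance by at most `ε Δ ≤ ε * dFrechet z ℓ x y` (`dFrechet_le_add`), and the new series
is a word over an alphabet `Fin (ℓ + 1) × Fin (⌈2 / ε⌉ + 1)` that depends only on `ℓ` and `ε`.

The distances from a word to all `y` are determined by its *type* (`matchSet`): the set of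
`ℓ`-tuples of subsets of the alphabet along which the word can be traversed; the relevant tuples
are the balls of radius `r` around the `y j` (`dFrechet_le_of_matchSet_subset`). There are finitely
many types, so choosing one word for each realised type gives a uniform length bound
(`exists_length_bound`).
-/

/-- A traversal between lengths `z` and `ℓ` (1-based indices). -/
def IsTraversal (z ℓ : ℕ) (T : List (ℕ × ℕ)) : Prop :=
  T.head? = some (1, 1) ∧ T.getLast? = some (z, ℓ) ∧
  T.Chain' (fun p q =>
    (q.1 = p.1 ∨ q.1 = p.1 + 1) ∧ (q.2 = p.2 ∨ q.2 = p.2 + 1) ∧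
    (q.1 = p.1 + 1 ∨ q.2 = p.2 + 1))

/-- Discrete Fréchet distance between curves of complexities `z` and `ℓ`. -/
noncomputable def dFrechet {E : Type*} [PseudoMetricSpace E] (z ℓ : ℕ)
    (p q : ℕ → E) : ℝ :=
  sInf {r : ℝ | ∃ T : List (ℕ × ℕ), IsTraversal z ℓ T ∧
    r = (T.map (fun ij => dist (p ij.1) (q ij.2))).foldr max 0}

theorem chain_bounds {T : List (ℕ × ℕ)} {a c : ℕ × ℕ} (hh : T.head? = some a)
    (hl : T.getLast? = some c)
    (hc : T.IsChain (fun p q =>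
      (q.1 = p.1 ∨ q.1 = p.1 + 1) ∧ (q.2 = p.2 ∨ q.2 = p.2 + 1) ∧
      (q.1 = p.1 + 1 ∨ q.2 = p.2 + 1))) :
    (∀ p ∈ T, a.1 ≤ p.1 ∧ p.1 ≤ c.1 ∧ a.2 ≤ p.2 ∧ p.2 ≤ c.2) ∧
      ∀ i, a.1 ≤ i → i ≤ c.1 → ∃ p ∈ T, p.1 = i := by
  induction T generalizing a with
  | nil => simp at hh
  | cons t T ih =>
    obtain rfl : t = a := by simpa using hh
    cases T with
    | nil =>
      obtain rfl : t = c := by simpa using hl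
      refine ⟨by simp, fun i h1 h2 => ⟨t, by simp, by omega⟩⟩
    | cons s T =>
      rw [List.isChain_cons_cons] at hc
      obtain ⟨hts, hc⟩ := hc
      obtain ⟨h1, h2⟩ := ih (a := s) rfl (by simpa using hl) hc
      have hs := h1 s (by simp)
      refine ⟨fun p hp => ?_, fun i hi1 hi2 => ?_⟩
      · rcases List.mem_cons.1 hp with rfl | hp
        · omega
        · have := h1 p hp
          omega
      · by_cases h : s.1 ≤ i
        · obtain ⟨p, hp, hpi⟩ := h2 i h hi2
          exact ⟨p, List.mem_cons_of_mem _ hp, hpi⟩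
        · exact ⟨t, by simp, by omega⟩

theorem IsTraversal.bounds {z ℓ : ℕ} {T : List (ℕ × ℕ)} (hT : IsTraversal z ℓ T)
    {p : ℕ × ℕ} (hp : p ∈ T) : 1 ≤ p.1 ∧ p.1 ≤ z ∧ 1 ≤ p.2 ∧ p.2 ≤ ℓ :=
  (chain_bounds hT.1 hT.2.1 hT.2.2).1 p hp

theorem IsTraversal.covers {z ℓ : ℕ} {T : List (ℕ × ℕ)} (hT : IsTraversal z ℓ T)
    {i : ℕ} (h1 : 1 ≤ i) (h2 : i ≤ z) : ∃ p ∈ T, p.1 = i :=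
  (chain_bounds hT.1 hT.2.1 hT.2.2).2 i h1 h2

theorem IsTraversal.snoc {z ℓ z' ℓ' : ℕ} {T : List (ℕ × ℕ)} (hT : IsTraversal z ℓ T)
    (h : (z' = z ∨ z' = z + 1) ∧ (ℓ' = ℓ ∨ ℓ' = ℓ + 1) ∧ (z' = z + 1 ∨ ℓ' = ℓ + 1)) :
    IsTraversal z' ℓ' (T ++ [(z', ℓ')]) := by
  obtain ⟨h1, h2, h3⟩ := hT
  refine ⟨by simp [h1], by simp, ?_⟩
  refine List.IsChain.append h3 (by simp) ?_
  intro p hp q hq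
  rw [h2] at hp
  simp only [Option.mem_def, Option.some.injEq, List.head?_cons] at hp hq
  subst hp hq
  exact h

theorem exists_isTraversal {z ℓ : ℕ} (hz : 1 ≤ z) (hℓ : 1 ≤ ℓ) : ∃ T, IsTraversal z ℓ T := by
  induction z, hz using Nat.le_induction with
  | base =>
    induction ℓ, hℓ using Nat.le_induction with
    | base => exact ⟨[(1, 1)], rfl, rfl, List.isChain_singleton _⟩
    | succ n _ ih =>
      obtain ⟨T, hT⟩ := ih
      exact ⟨_, hT.snoc (z' := 1) (ℓ' := n + 1) (by omega)⟩
  | succ n _ ih =>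
    obtain ⟨T, hT⟩ := ih
    exact ⟨_, hT.snoc (z' := n + 1) (ℓ' := ℓ) (by omega)⟩

theorem foldr_max_le_iff {α : Type*} (f : α → ℝ) (T : List α) (r : ℝ) :
    (T.map f).foldr max 0 ≤ r ↔ 0 ≤ r ∧ ∀ p ∈ T, f p ≤ r := by
  induction T with
  | nil => simp
  | cons t T ih => simp [ih]; tauto

theorem dFrechet_le {z ℓ : ℕ} {p q : ℕ → ℝ} {T : List (ℕ × ℕ)} (hT : IsTraversal z ℓ T) {r : ℝ}
    (hr : 0 ≤ r) (h : ∀ ij ∈ T, dist (p ij.1) (q ij.2) ≤ r) : dFrechet z ℓ p q ≤ r := by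
  refine le_trans (csInf_le ⟨0, ?_⟩ ⟨T, hT, rfl⟩) ((foldr_max_le_iff _ T r).2 ⟨hr, h⟩)
  rintro _ ⟨T, -, rfl⟩
  exact ((foldr_max_le_iff _ T _).1 le_rfl).1

theorem le_dFrechet {z ℓ : ℕ} (hz : 1 ≤ z) (hℓ : 1 ≤ ℓ) {p q : ℕ → ℝ} {c : ℝ}
    (h : ∀ T r, IsTraversal z ℓ T → 0 ≤ r → (∀ ij ∈ T, dist (p ij.1) (q ij.2) ≤ r) → c ≤ r) :
    c ≤ dFrechet z ℓ p q := by
  obtain ⟨T, hT⟩ := exists_isTraversal hz hℓ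
  refine le_csInf ⟨_, T, hT, rfl⟩ ?_
  rintro _ ⟨T, hT, rfl⟩
  obtain ⟨h1, h2⟩ := (foldr_max_le_iff _ T _).1 le_rfl
  exact h T _ hT h1 h2

theorem dFrechet_le_add {z ℓ : ℕ} (hz : 1 ≤ z) (hℓ : 1 ≤ ℓ) {p p' : ℕ → ℝ} {δ : ℝ} (hδ : 0 ≤ δ)
    (h : ∀ i, 1 ≤ i → i ≤ z → dist (p i) (p' i) ≤ δ) (q : ℕ → ℝ) :
    dFrechet z ℓ p q ≤ dFrechet z ℓ p' q + δ := by
  rw [← sub_le_iff_le_add]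
  refine le_dFrechet hz hℓ fun T r hT hr hd => ?_
  rw [sub_le_iff_le_add]
  refine dFrechet_le hT (by positivity) fun ij hij => ?_
  have hb := hT.bounds hij
  linarith [dist_triangle (p ij.1) (p' ij.1) (q ij.2), h ij.1 hb.1 hb.2.1, hd ij hij]

theorem exists_dist_le_dFrechet {z ℓ : ℕ} (hz : 1 ≤ z) (hℓ : 1 ≤ ℓ) (p q : ℕ → ℝ) {i : ℕ}
    (h1 : 1 ≤ i) (h2 : i ≤ z) : ∃ j, j ≤ ℓ ∧ dist (p i) (q j) ≤ dFrechet z ℓ p q := by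
  -- The closest `q j` works for all traversals at once, so no optimal traversal is needed.
  obtain ⟨j, hj, hmin⟩ := (Finset.Icc 1 ℓ).exists_min_image (fun j => dist (p i) (q j))
    ⟨1, by simpa using hℓ⟩
  refine ⟨j, (Finset.mem_Icc.1 hj).2, le_dFrechet hz hℓ fun T r hT hr hd => ?_⟩
  obtain ⟨s, hs, rfl⟩ := hT.covers h1 h2
  have hb := hT.bounds hs
  exact (hmin s.2 (Finset.mem_Icc.2 hb.2.2)).trans (hd s hs)

/-- The type of the word `w 1, …, w z` over the alphabet `A`: all tuples `B` of subsets of `A` for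
which some traversal only pairs letters `w i` with sets `B j` containing them. Positions
`1, …, ℓ` are read in `Fin (ℓ + 1)`; the entry `B 0` plays no role. -/
def matchSet {A : Type*} (ℓ z : ℕ) (w : ℕ → A) : Set (Fin (ℓ + 1) → Set A) :=
  {B | ∃ T, IsTraversal z ℓ T ∧ ∀ ij ∈ T, w ij.1 ∈ B (Fin.ofNat (ℓ + 1) ij.2)}

theorem dFrechet_le_of_matchSet_subset {A : Type*} {ℓ z z' : ℕ} (hz : 1 ≤ z) (hℓ : 1 ≤ ℓ)
    {w w' : ℕ → A} (h : matchSet ℓ z w ⊆ matchSet ℓ z' w') (φ : A → ℝ) (y : ℕ → ℝ) :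
    dFrechet z' ℓ (φ ∘ w') y ≤ dFrechet z ℓ (φ ∘ w) y := by
  refine le_dFrechet hz hℓ fun T r hT hr hd => ?_
  have key : ∀ j, j ≤ ℓ → (Fin.ofNat (ℓ + 1) j).val = j := fun j hj => by
    simp [Fin.ofNat, Nat.mod_eq_of_lt (Nat.lt_succ_of_le hj)]
  have hB : (fun j : Fin (ℓ + 1) => {a | dist (φ a) (y j.val) ≤ r}) ∈ matchSet ℓ z w := by
    refine ⟨T, hT, fun ij hij => ?_⟩
    rw [Set.mem_ofPred_eq, key _ (hT.bounds hij).2.2.2]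
    exact hd ij hij
  obtain ⟨T', hT', hm⟩ := h hB
  refine dFrechet_le hT' hr fun ij hij => ?_
  have := hm ij hij
  rwa [Set.mem_ofPred_eq, key _ (hT'.bounds hij).2.2.2] at this

/-- Only finitely many types exist over a finite alphabet, so every type of a nonempty word is
realised by a nonempty word of bounded length. -/
theorem exists_length_bound (A : Type) [Finite A] (ℓ : ℕ) :
    ∃ Z : ℕ, 1 ≤ Z ∧ ∀ z, 1 ≤ z → ∀ w : ℕ → A, ∃ (z' : ℕ) (w' : ℕ → A),
      1 ≤ z' ∧ z' ≤ Z ∧ matchSet ℓ z' w' = matchSet ℓ z w := by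
  have h : ∀ c : Set (Fin (ℓ + 1) → Set A), ∃ n : ℕ, ∀ z, 1 ≤ z → ∀ w : ℕ → A,
      matchSet ℓ z w = c → ∃ (z' : ℕ) (w' : ℕ → A), 1 ≤ z' ∧ z' ≤ n ∧ matchSet ℓ z' w' = c := by
    intro c
    by_cases hc : ∃ z, 1 ≤ z ∧ ∃ w : ℕ → A, matchSet ℓ z w = c
    · obtain ⟨n, hn, w', hw'⟩ := hc
      exact ⟨n, fun _ _ _ _ => ⟨n, w', hn, le_rfl, hw'⟩⟩
    · exact ⟨0, fun z hz w hw => (hc ⟨z, hz, w, hw⟩).elim⟩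
  choose n hn using h
  obtain ⟨M, hM⟩ := (Set.finite_range n).bddAbove
  refine ⟨M + 1, by omega, fun z hz w => ?_⟩
  obtain ⟨z', w', h1, h2, h3⟩ := hn _ z hz w rfl
  have := hM (Set.mem_range_self (matchSet ℓ z w))
  exact ⟨z', w', h1, by omega, h3⟩

theorem exists_grid {ε Δ t : ℝ} (hε : 0 < ε) (h0 : 0 ≤ t) (h2 : t ≤ 2 * Δ) :
    ∃ k : ℕ, k ≤ ⌈2 / ε⌉₊ ∧ |t - k * (ε * Δ)| ≤ ε * Δ := by
  rcases (show 0 ≤ Δ by linarith).eq_or_lt with hΔ | hΔ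
  · refine ⟨0, by simp, ?_⟩
    have : t = 0 := by linarith
    simp [this, ← hΔ]
  · have hp : 0 < ε * Δ := by positivity
    have hq : 0 ≤ t / (ε * Δ) := by positivity
    refine ⟨⌊t / (ε * Δ)⌋₊, ?_, ?_⟩
    · refine (Nat.floor_le_floor ?_).trans (Nat.floor_le_ceil (2 / ε))
      rw [div_le_div_iff₀ hp hε]
      nlinarith
    · have a1 := (le_div_iff₀ hp).1 (Nat.floor_le hq)
      have a2 := (div_lt_iff₀ hp).1 (Nat.lt_floor_add_one (t / (ε * Δ)))
      rw [abs_le]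
      constructor <;> linarith

/-- complexity reduction for time series under the discrete Fréchet
distance.  For every `ℓ` and `ε` there is a bound `Z` (independent of `z` and `x`)
such that every time series `x ∈ ℝ^z` admitting a minimum-error `ℓ`-simplification
can be replaced by a time series of complexity at most `Z` whose distance to every
`y ∈ ℝ^ℓ` is within a `(1±ε)` factor. -/
theorem stmt14 (ℓ : ℕ) (hℓ : 1 ≤ ℓ) (ε : ℝ) (hε : ε ∈ Set.Ioo (0 : ℝ) 1) :
    ∃ Z : ℕ, 1 ≤ Z ∧
      ∀ (z : ℕ), 1 ≤ z → ∀ x : ℕ → ℝ,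
        (∃ xt : ℕ → ℝ, ∀ y : ℕ → ℝ, dFrechet z ℓ x xt ≤ dFrechet z ℓ x y) →
        ∃ (z' : ℕ) (x' : ℕ → ℝ), 1 ≤ z' ∧ z' ≤ Z ∧
          ∀ y : ℕ → ℝ,
            (1 - ε) * dFrechet z ℓ x y ≤ dFrechet z' ℓ x' y ∧
            dFrechet z' ℓ x' y ≤ (1 + ε) * dFrechet z ℓ x y := by
  obtain ⟨hε0, -⟩ := hε
  obtain ⟨Z, hZ, hred⟩ := exists_length_bound (Fin (ℓ + 1) × Fin (⌈2 / ε⌉₊ + 1)) ℓ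
  refine ⟨Z, hZ, fun z hz x ⟨xt, hxt⟩ => ?_⟩
  set Δ := dFrechet z ℓ x xt with hΔ
  have hΔ0 : 0 ≤ Δ := le_dFrechet hz hℓ fun _ _ _ hr _ => hr
  let φ : Fin (ℓ + 1) × Fin (⌈2 / ε⌉₊ + 1) → ℝ := fun a => xt a.1 - Δ + (a.2 : ℕ) * (ε * Δ)
  have hround : ∀ i, ∃ a, 1 ≤ i → i ≤ z → dist (x i) (φ a) ≤ ε * Δ := by
    intro i
    by_cases hi : 1 ≤ i ∧ i ≤ z
    · obtain ⟨j, hj, hd⟩ := exists_dist_le_dFrechet hz hℓ x xt hi.1 hi.2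
      rw [← hΔ, Real.dist_eq, abs_le] at hd
      obtain ⟨k, hk, hkd⟩ := exists_grid (Δ := Δ) (t := x i - xt j + Δ) hε0
        (by linarith) (by linarith)
      refine ⟨(⟨j, by omega⟩, ⟨k, by omega⟩), fun _ _ => ?_⟩
      rw [Real.dist_eq]
      convert hkd using 2
      simp only [φ]
      ring
    · exact ⟨0, fun h1 h2 => (hi ⟨h1, h2⟩).elim⟩
  choose w hw using hround
  obtain ⟨z', w', hz', hz'Z, hS⟩ := hred z hz w
  refine ⟨z', φ ∘ w', hz', hz'Z, fun y => ?_⟩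
  have heq : dFrechet z' ℓ (φ ∘ w') y = dFrechet z ℓ (φ ∘ w) y :=
    le_antisymm (dFrechet_le_of_matchSet_subset hz hℓ hS.ge φ y)
      (dFrechet_le_of_matchSet_subset hz' hℓ hS.le φ y)
  have hδ : 0 ≤ ε * Δ := by positivity
  have u1 := dFrechet_le_add hz hℓ (p := x) (p' := φ ∘ w) hδ hw y
  have u2 := dFrechet_le_add hz hℓ (p := φ ∘ w) (p' := x) hδ
    (fun i h1 h2 => by rw [dist_comm]; exact hw i h1 h2) y
  have u3 : ε * Δ ≤ ε * dFrechet z ℓ x y := mul_le_mul_of_nonneg_left (hxt y) hε0.le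
  rw [heq]
  constructor <;> linarith
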